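/- arXiv:2211.12697 — 2 statements merged into one kernel-verified Lean document; each statement's English description precedes it below -/
import Mathlib

section
/- Let a, b, c be real numbers with a − 2b − 4c ≠ 0. For every real x > 0, the normalized function g_{1/2}(x) = 2^{1/2} Γ(3/2) x^{1/2} N_{1/2}(x) / Q(1/2) satisfies g_{1/2}(x) = [4(a−b) x cos x + (4a x² − 3a + 2b − 4c) sin x] / (a − 2b − 4c). -/
open Real

/-- The Bessel function of the first kind of order `ν`, defined by its power series
(as a function of a real variable). -/
noncomputable def besselJ (ν : ℝ) (x : ℝ) : ℝ :=
  ∑' n : ℕ, ((-1 : ℝ) ^ n / (n.factorial * Real.Gamma (n + ν + 1))) * (x / 2) ^ (2 * (n : ℝ) + ν)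

/-- `N_ν(x) = a x² J_ν''(x) + b x J_ν'(x) + c J_ν(x)`. -/
noncomputable def besselN (a b c ν : ℝ) (x : ℝ) : ℝ :=
  a * x ^ 2 * deriv (deriv (besselJ ν)) x + b * x * deriv (besselJ ν) x + c * besselJ ν x

/-- `Q(t) = a t (t − 1) + b t + c`. -/
def Qpoly (a b c : ℝ) (t : ℝ) : ℝ := a * t * (t - 1) + b * t + c



lemma gamma_aux (n : ℕ) : (n.factorial : ℝ) * Real.Gamma (n + 1/2 + 1) * 2 ^ (2*n+1)
    = ((2*n+1).factorial : ℝ) * √π := by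
  induction n with
  | zero =>
    rw [Real.Gamma_add_one (by norm_num)]
    have := Real.Gamma_one_half_eq
    simp only [Nat.cast_zero, zero_add, this]
    norm_num
    ring
  | succ k ih =>
    have h1 : (((k + 1 : ℕ) : ℝ) + 1/2 + 1) = ((k:ℝ) + 1/2 + 1) + 1 := by push_cast; ring
    rw [h1, Real.Gamma_add_one (by positivity)]
    have h2 : 2 * (k+1) + 1 = (2*k+1) + 1 + 1 := by ring
    rw [h2, Nat.factorial_succ (2*k+1+1), Nat.factorial_succ (2*k+1), Nat.factorial_succ k]
    push_cast
    rw [pow_succ, pow_succ]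
    linear_combination (2*(k:ℝ)+3) * (2*k+2) * ih

lemma besselJ_half (x : ℝ) (hx : 0 < x) :
    besselJ (1/2) x = ((1/2 : ℝ) ^ (-(1/2) : ℝ) / √π) * (x ^ (-(1/2) : ℝ) * Real.sin x) := by
  unfold besselJ
  have hs := (Real.hasSum_sin x).mul_left (((1/2 : ℝ) ^ (-(1/2) : ℝ) / √π) * x ^ (-(1/2) : ℝ))
  rw [← mul_assoc, ← hs.tsum_eq]
  congr 1
  funext n
  have e : (x/2) ^ (2 * (n:ℝ) + 1/2) = (x/2)^(2*n+1) * ((1/2 : ℝ) ^ (-(1/2) : ℝ) * x ^ (-(1/2) : ℝ)) := by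
    rw [← Real.mul_rpow (by norm_num) hx.le, ← Real.rpow_natCast,
      show (1/2 * x : ℝ) = x/2 by ring, ← Real.rpow_add (by positivity)]
    congr 1; push_cast; ring
  rw [e, div_pow]
  have g := gamma_aux n
  have hG : 0 < Real.Gamma ((n:ℝ) + 1/2 + 1) := Real.Gamma_pos_of_pos (by positivity)
  have hf : (0:ℝ) < n.factorial := by positivity
  have hf2 : (0:ℝ) < (2*n+1).factorial := by positivity
  have hp : 0 < √π := by positivity
  generalize (1/2 : ℝ) ^ (-(1/2) : ℝ) = A
  generalize x ^ (-(1/2) : ℝ) = B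
  generalize Real.Gamma ((n:ℝ) + 1/2 + 1) = G at *
  generalize ((2*n+1).factorial : ℝ) = F at *
  generalize (n.factorial : ℝ) = f at *
  have h2 : (0:ℝ) < 2^(2*n+1) := by positivity
  generalize (2:ℝ)^(2*n+1) = T at *
  have : (-1:ℝ)^n / (f * G) * (x^(2*n+1)/T * (A*B)) = (-1)^n * x^(2*n+1) * A * B / (f*G*T) := by
    field_simp
  rw [this, g]
  field_simp

lemma hasDeriv_aux (r y : ℝ) (hy : 0 < y) :
    HasDerivAt (fun y : ℝ => y ^ r) (r * y ^ r / y) y := by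
  have := Real.hasDerivAt_rpow_const (x := y) (p := r) (Or.inl hy.ne')
  rwa [Real.rpow_sub_one hy.ne', ← mul_div_assoc] at this

theorem stmt_3 (a b c : ℝ) (h : a - 2 * b - 4 * c ≠ 0) (x : ℝ) (hx : 0 < x) :
    (2 : ℝ) ^ ((1 : ℝ) / 2) * Real.Gamma (3 / 2) * x ^ ((1 : ℝ) / 2) *
        besselN a b c (1/2) x / Qpoly a b c (1/2) =
      (4 * (a - b) * x * Real.cos x + (4 * a * x ^ 2 - 3 * a + 2 * b - 4 * c) * Real.sin x) /
        (a - 2 * b - 4 * c) := by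
  obtain ⟨C, hC⟩ : ∃ C, C = ((1/2 : ℝ) ^ (-(1/2) : ℝ) / √π) := ⟨_, rfl⟩
  have hJ : ∀ y : ℝ, 0 < y → besselJ (1/2) y = C * (y ^ (-(1/2) : ℝ) * Real.sin y) := by
    intro y hy; rw [hC]; exact besselJ_half y hy
  have d1 : ∀ y : ℝ, 0 < y → deriv (besselJ (1/2)) y
      = C * (y ^ (-(1/2) : ℝ) * (Real.cos y - Real.sin y / (2*y))) := by
    intro y hy
    have he : besselJ (1/2) =ᶠ[nhds y] fun y => C * (y ^ (-(1/2) : ℝ) * Real.sin y) := by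
      filter_upwards [lt_mem_nhds hy] with z hz using hJ z hz
    rw [he.deriv_eq]
    refine Eq.trans (((hasDeriv_aux (-(1/2)) y hy).mul (Real.hasDerivAt_sin y)).const_mul C).deriv ?_
    field_simp
    ring
  have d2 : deriv (deriv (besselJ (1/2))) x
      = C * (x ^ (-(1/2) : ℝ) * (- Real.sin x - Real.cos x / x + 3 / 4 * Real.sin x / x^2)) := by
    have he : deriv (besselJ (1/2)) =ᶠ[nhds x]
        fun y => C * (y ^ (-(1/2) : ℝ) * (Real.cos y - Real.sin y / (2*y))) := by
      filter_upwards [lt_mem_nhds hx] with z hz using d1 z hz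
    rw [he.deriv_eq]
    have h3 := (Real.hasDerivAt_cos x).sub ((Real.hasDerivAt_sin x).div
      ((hasDerivAt_id x).const_mul 2) (by simp; exact hx.ne'))
    have h4 := (((hasDeriv_aux (-(1/2)) x hx).mul h3).const_mul C).deriv
    refine Eq.trans h4 ?_
    simp only [id, Pi.sub_apply, Pi.div_apply]
    field_simp
    ring
  have hB : x ^ ((1:ℝ)/2) * x ^ (-(1/2) : ℝ) = 1 := by
    rw [← Real.rpow_add hx]; norm_num
  have hK : (2 : ℝ) ^ ((1 : ℝ) / 2) * Real.Gamma (3 / 2) * C = 1 := by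
    have h1 : (1/2 : ℝ) ^ (-(1/2) : ℝ) = 2 ^ ((1:ℝ)/2) := by
      rw [Real.rpow_neg (by norm_num), ← Real.inv_rpow (by norm_num)]; norm_num
    have h2 : (2:ℝ) ^ ((1:ℝ)/2) * 2 ^ ((1:ℝ)/2) = 2 := by
      rw [← Real.rpow_add (by norm_num)]; norm_num
    have h3 : Real.Gamma (3/2) = 1/2 * √π := by
      rw [show (3/2:ℝ) = 1/2 + 1 by norm_num, Real.Gamma_add_one (by norm_num),
        Real.Gamma_one_half_eq]
    have hp : 0 < √π := by positivity
    rw [hC, h1, h3]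
    field_simp
    linarith
  have hQ : Qpoly a b c (1/2) = -(a - 2*b - 4*c)/4 := by unfold Qpoly; ring
  unfold besselN
  rw [hQ, d2, d1 x hx, hJ x hx]
  generalize x ^ (-(1/2) : ℝ) = B at *
  generalize x ^ ((1:ℝ)/2) = D at *
  generalize (2:ℝ) ^ ((1:ℝ)/2) * Real.Gamma (3/2) = K at *
  have key : K * D * (a * x^2 * (C * (B * (- Real.sin x - Real.cos x / x + 3 / 4 * Real.sin x / x^2)))
      + b * x * (C * (B * (Real.cos x - Real.sin x / (2*x)))) + c * (C * (B * Real.sin x)))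
      = (K*C)*(D*B) * (a * (-x^2 * Real.sin x - x * Real.cos x + 3/4 * Real.sin x)
        + b * (x * Real.cos x - Real.sin x/2) + c * Real.sin x) := by
    field_simp
  rw [key, hK, hB, div_eq_div_iff (by intro h0; apply h; linarith) h]
  ring
end

section
/- Let a, b, c be real numbers with a − 2b − 4c ≠ 0. For every real x > 0, the normalized function h_{1/2}(x) = 2^{1/2} Γ(3/2) x^{3/4} N_{1/2}(√x) / Q(1/2) satisfies h_{1/2}(x) = [4(a−b) x cos(√x) + (4a x − 3a + 2b − 4c) √x sin(√x)] / (a − 2b − 4c). -/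
open Real

lemma gam_aux (n : ℕ) : Real.Gamma (n + 1/2 + 1) * n.factorial * 2 ^ (2*n+1)
    = (2*n+1).factorial * √π := by
  induction n with
  | zero =>
    have := Real.Gamma_add_one (s := 1/2) (by norm_num)
    simp only [Nat.cast_zero, zero_add]
    rw [this, Real.Gamma_one_half_eq]
    simp; ring
  | succ k ih =>
    have h1 : ((k+1 : ℕ) : ℝ) + 1/2 + 1 = (k + 1/2 + 1) + 1 := by push_cast; ring
    rw [h1, Real.Gamma_add_one (by positivity)]
    have h2 : 2 * (k+1) + 1 = (2*k+1) + 1 + 1 := by ring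
    rw [h2, Nat.factorial_succ (2*k+1+1), Nat.factorial_succ (2*k+1), Nat.factorial_succ k]
    push_cast
    rw [pow_succ, pow_succ]
    linear_combination (2*(k:ℝ)+3) * (2*k+2) * ih

lemma J_half (x : ℝ) (hx : 0 < x) :
    besselJ (1/2) x = (2 / (√π * √2)) * (sin x / √x) := by
  have hs := (Real.hasSum_sin x).mul_left (2 / (√π * √2) / √x)
  unfold besselJ
  rw [show (2 / (√π * √2)) * (sin x / √x) = 2 / (√π * √2) / √x * sin x by ring, ← hs.tsum_eq]
  refine tsum_congr fun n => ?_
  have hg := gam_aux n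
  have hG : 0 < Real.Gamma ((n:ℝ) + 1/2 + 1) := Real.Gamma_pos_of_pos (by positivity)
  have hp : (x/2) ^ (2 * (n:ℝ) + 1/2) = x^(2*n) / 2^(2*n) * (√x / √2) := by
    rw [Real.rpow_add (by positivity), ← Real.sqrt_eq_rpow, Real.sqrt_div hx.le,
      ← div_pow]
    congr 1
    rw [← Real.rpow_natCast]; push_cast; rfl
  rw [hp]
  have hpi : 0 < √π := Real.sqrt_pos.2 Real.pi_pos
  have hsx : 0 < √x := Real.sqrt_pos.2 hx
  have hx2 : √x * √x = x := Real.mul_self_sqrt hx.le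
  have hf : (0:ℝ) < n.factorial := by positivity
  have hF : (0:ℝ) < (2*n+1).factorial := by positivity
  have hGe : (n.factorial : ℝ) * Real.Gamma ((n:ℝ) + 1/2 + 1)
      = (2*n+1).factorial * √π / 2^(2*n+1) := by
    rw [eq_div_iff (by positivity)]; linarith
  rw [hGe]
  have h2 : x^(2*n+1) = x^(2*n) * (√x * √x) := by rw [hx2]; ring
  rw [h2]
  field_simp
  ring

lemma d1 (C x : ℝ) (hx : 0 < x) : HasDerivAt (fun t => C * (sin t / √t))
    (C * (cos x / √x - sin x / (2 * x * √x))) x := by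
  have hs : √x ≠ 0 := (Real.sqrt_pos.2 hx).ne'
  have hx2 : √x ^ 2 = x := Real.sq_sqrt hx.le
  refine HasDerivAt.congr_deriv
    (((Real.hasDerivAt_sin x).div (Real.hasDerivAt_sqrt hx.ne') hs).const_mul C) ?_
  congr 1
  rw [← hx2, Real.sqrt_sq (Real.sqrt_nonneg x)]
  field_simp

lemma d2 (C x : ℝ) (hx : 0 < x) :
    HasDerivAt (fun x => C * (cos x / √x - sin x / (2 * x * √x)))
    (C * (-sin x / √x - cos x / (x * √x) + 3/4 * sin x / (x^2 * √x))) x := by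
  have hs : √x ≠ 0 := (Real.sqrt_pos.2 hx).ne'
  have hx2 : √x ^ 2 = x := Real.sq_sqrt hx.le
  have hd := Real.hasDerivAt_sqrt hx.ne'
  have hm := (((hasDerivAt_id x).const_mul 2).mul hd)
  refine HasDerivAt.congr_deriv ((((Real.hasDerivAt_cos x).div hd hs).sub
    ((Real.hasDerivAt_sin x).div hm (by simp [hx.ne', hs]))).const_mul C) ?_
  congr 1
  simp only [id, Pi.mul_apply]
  generalize cos x = co
  generalize sin x = si
  generalize √x = s at *
  subst hx2
  field_simp
  ring

theorem stmt_4 (a b c : ℝ) (h : a - 2 * b - 4 * c ≠ 0) (x : ℝ) (hx : 0 < x) :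
    (2 : ℝ) ^ ((1 : ℝ) / 2) * Real.Gamma (3 / 2) * x ^ ((3 : ℝ) / 4) *
        besselN a b c (1/2) (Real.sqrt x) / Qpoly a b c (1/2) =
      (4 * (a - b) * x * Real.cos (Real.sqrt x) +
          (4 * a * x - 3 * a + 2 * b - 4 * c) * Real.sqrt x * Real.sin (Real.sqrt x)) /
        (a - 2 * b - 4 * c) := by
  have hG : Real.Gamma (3/2) = √π / 2 := by
    rw [show (3/2:ℝ) = 1/2 + 1 by norm_num, Real.Gamma_add_one (by norm_num),
      Real.Gamma_one_half_eq]
    ring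
  have hD1 : ∀ t : ℝ, 0 < t → deriv (besselJ (1/2)) t =
      (2 / (√π * √2)) * (cos t / √t - sin t / (2 * t * √t)) := fun t ht => by
    rw [← (d1 _ t ht).deriv]
    apply Filter.EventuallyEq.deriv_eq
    filter_upwards [lt_mem_nhds ht] with y hy using J_half y hy
  have hD2 : ∀ t : ℝ, 0 < t → deriv (deriv (besselJ (1/2))) t = (2 / (√π * √2)) *
      (-sin t / √t - cos t / (t * √t) + 3/4 * sin t / (t^2 * √t)) := fun t ht => by
    rw [← (d2 _ t ht).deriv]
    apply Filter.EventuallyEq.deriv_eq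
    filter_upwards [lt_mem_nhds ht] with y hy using hD1 y hy
  have ht : 0 < √x := Real.sqrt_pos.2 hx
  have hs : 0 < √√x := Real.sqrt_pos.2 ht
  have hp : x ^ ((3:ℝ)/4) = √x * √√x := by
    rw [Real.sqrt_eq_rpow, Real.sqrt_eq_rpow, ← Real.rpow_mul hx.le, ← Real.rpow_add hx]
    norm_num
  have hQ : Qpoly a b c (1/2) = -(a - 2*b - 4*c)/4 := by unfold Qpoly; ring
  rw [hQ, hp, hG, ← Real.sqrt_eq_rpow, besselN, hD1 _ ht, hD2 _ ht, J_half _ ht]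
  have hx2 : x = √x ^ 2 := (Real.sq_sqrt hx.le).symm
  have hpi : 0 < √π := Real.sqrt_pos.2 Real.pi_pos
  generalize √√x = s at *
  generalize √x = t at *
  subst hx2
  generalize a - 2*b - 4*c = D at *
  field_simp
  ring
end
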